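/- Let M ≥ 2 be an integer, f : ℤ → ℝ a function with f(n+M) = f(n) for all n ∈ ℤ, ν ∈ {0,1}, and a ≥ 0, b ≥ 1 integers. Assume G_f^{(ν)}(k) ≠ 0 for some integer k ≥ 1 and let k_ν be the least such k. Define ξ(n) as in the context, and for n ≥ 1 set g(n) := ∑_{ℓ=0}^{n−1} (−1)^ℓ · C(n−1, ℓ) · ξ(n−ℓ). Then g(n) / [ (−1)^ν · (M/(2π k_ν))^(2n+ν+1) · G_f^{(ν)}(k_ν) · 2^(2n+ν) · n! · n^(ν−1/2) · e^(−b k_ν² π²/(2M²)) / (b^n · √(πM)) ] → 1 as n → ∞. -/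

import Mathlib

/-- The Fourier coefficient `G_f^{(ν)}(k)` of a function `f : ℤ → ℝ` of period `M`. -/
noncomputable def Gf (M : ℕ) (f : ℤ → ℝ) (ν : ℕ) (k : ℕ) : ℝ :=
  if ν = 0 then
    (2 / Real.sqrt M) * ∑ m ∈ Finset.range M, f m * Real.sin (2 * Real.pi * m * k / M)
  else
    (2 / Real.sqrt M) * ∑ m ∈ Finset.range M, f m * Real.cos (2 * Real.pi * m * k / M)

/-- `C_n = (−1)^(n+1) (M^(2n+ν)/(2n+ν+1)) ∑_{m=1}^M f(m) B_{2n+ν+1}(m/M)`. -/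
noncomputable def Cf (M : ℕ) (f : ℤ → ℝ) (ν : ℕ) (n : ℕ) : ℝ :=
  (-1) ^ (n + 1) * ((M : ℝ) ^ (2 * n + ν) / (2 * n + ν + 1)) *
    ∑ m ∈ Finset.Icc 1 M,
      f m * (((Polynomial.bernoulli (2 * n + ν + 1)).eval ((m : ℚ) / (M : ℚ)) : ℚ) : ℝ)

/-- `D_n = b^(−n) ∑_{k=0}^n C(n,k) a^(n−k) C_k`. -/
noncomputable def Df (M : ℕ) (f : ℤ → ℝ) (ν a b : ℕ) (n : ℕ) : ℝ :=
  ((b : ℝ) ^ n)⁻¹ *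
    ∑ k ∈ Finset.range (n + 1), (n.choose k : ℝ) * (a : ℝ) ^ (n - k) * Cf M f ν k

/-- The unsigned Stirling number of the first kind `s(n,j)`: the coefficient of `X^j`
in `X (X+1) (X+2) ⋯ (X+n−1)`. -/
noncomputable def stirling1 (n j : ℕ) : ℝ :=
  (∏ i ∈ Finset.range n, (Polynomial.X + Polynomial.C (i : ℝ))).coeff j

/-- `ξ(0) = D_0` and `ξ(n) = (1/n!) ∑_{m=0}^{n−1} s(n, n−m) D_{n−m}` for `n ≥ 1`. -/
noncomputable def xif (M : ℕ) (f : ℤ → ℝ) (ν a b : ℕ) : ℕ → ℝ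
  | 0 => Df M f ν a b 0
  | n + 1 => (1 / ((n + 1).factorial : ℝ)) *
      ∑ m ∈ Finset.range (n + 1), stirling1 (n + 1) (n + 1 - m) * Df M f ν a b (n + 1 - m)

/-!
The Fourier expansion of the Bernoulli polynomials turns `Cf M f ν n` into `(2 * n + ν)!` times a
Dirichlet series with coefficients `Gf M f ν j`, whose first nonzero term `j = kν` dominates. Hence
`C_n` grows like `(2 * n + ν)! * r ^ n` with `r = (M / (2 * π * kν)) ^ 2`.

Each of the passages `C_n → D_n → n! ξ(n) → n! g(n)` is a sum `∑ m, w n m * x (n - m)` whose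
weights behave like `(c * n ^ 2) ^ m / m !`. Since `(2 * (n - m) + ν)!` is about
`(2 * n + ν)! / (4 * n ^ 2) ^ m`, dominated convergence shows that such a sum multiplies the leading
constant by `∑ m, (c / (4 * r)) ^ m / m ! = exp (c / (4 * r))`. The binomial, Stirling and
alternating binomial weights have `c = 0`, `c = 1 / 2` and `c = -1`; the division by `b ^ n` in
`D_n` replaces `r` by `r / b`. Stirling's formula for `(2 * n + ν)! / n !` then gives the result.
-/

open Filter Finset Nat Polynomial Real Topology
open scoped Asymptotics

theorem tendsto_sum_range_succ_of_dominated {E : Type*} [NormedAddCommGroup E] [CompleteSpace E]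
    {F : ℕ → ℕ → E} {G : ℕ → E} {bound : ℕ → ℝ} (hbound : Summable bound)
    (hF : ∀ m, Tendsto (F · m) atTop (𝓝 (G m)))
    (hle : ∀ n, ∀ m ≤ n, ‖F n m‖ ≤ bound m) :
    Tendsto (fun n => ∑ m ∈ range (n + 1), F n m) atTop (𝓝 (∑' m, G m)) := by
  have hsum (n : ℕ) : ∑' m, (if m ≤ n then F n m else 0) = ∑ m ∈ range (n + 1), F n m := by
    rw [tsum_eq_sum (s := range (n + 1)) fun m hm => if_neg (by simpa using hm)]
    exact sum_congr rfl fun m hm => if_pos (mem_range_succ_iff.1 hm)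
  simp_rw [← hsum]
  refine tendsto_tsum_of_dominated_convergence hbound (fun m => (hF m).congr' ?_)
    (.of_forall fun n m => ?_)
  · filter_upwards [eventually_ge_atTop m] with n hn using (if_pos hn).symm
  · split_ifs with hmn
    · exact hle n m hmn
    · exact norm_zero.trans_le ((norm_nonneg _).trans (hle m m le_rfl))

theorem factorial_two_mul_add_eq (ν : ℕ) {n m : ℕ} (h : m ≤ n) :
    (2 * n + ν)! = (2 * (n - m) + ν)! * (2 * n + ν).descFactorial (2 * m) := by
  rw [← factorial_mul_descFactorial (by lia : 2 * m ≤ 2 * n + ν),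
    show 2 * n + ν - 2 * m = 2 * (n - m) + ν by lia]

theorem pow_mul_factorial_le_descFactorial_mul_pow {N j : ℕ} (h : j ≤ N) :
    N ^ j * j ! ≤ N.descFactorial j * j ^ j := by
  have hprod (a : ℕ) : a ^ j = ∏ _i ∈ range j, a := by simp
  rw [← descFactorial_self, descFactorial_eq_prod_range, descFactorial_eq_prod_range, hprod N,
    hprod j, ← prod_mul_distrib, ← prod_mul_distrib]
  refine prod_le_prod' fun i _ => ?_
  calc N * (j - i) = N * j - N * i := Nat.mul_sub ..
    _ ≤ N * j - j * i := by gcongr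
    _ = (N - i) * j := by rw [Nat.sub_mul, mul_comm j i]

theorem pow_le_exp_mul_descFactorial {N j : ℕ} (h : j ≤ N) :
    (N : ℝ) ^ j ≤ exp j * N.descFactorial j := by
  have hexp : (j : ℝ) ^ j ≤ exp j * j ! :=
    (div_le_iff₀ (by positivity)).1 (pow_div_factorial_le_exp j (by positivity) j)
  have hdesc : (N : ℝ) ^ j * j ! ≤ N.descFactorial j * (j : ℝ) ^ j := by
    exact_mod_cast pow_mul_factorial_le_descFactorial_mul_pow h
  refine le_of_mul_le_mul_right ?_ (by positivity : (0 : ℝ) < j !)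
  calc (N : ℝ) ^ j * j ! ≤ N.descFactorial j * (j : ℝ) ^ j := hdesc
    _ ≤ N.descFactorial j * (exp j * j !) := by gcongr
    _ = exp j * N.descFactorial j * j ! := by ring

theorem tendsto_descFactorial_div_pow (m : ℕ) :
    Tendsto (fun n : ℕ => (n.descFactorial m : ℝ) / (n : ℝ) ^ m) atTop (𝓝 1) := by
  refine (Asymptotics.isEquivalent_iff_tendsto_one ?_).1 (isEquivalent_descFactorial m)
  filter_upwards [eventually_ne_atTop 0] with n hn
  positivity

theorem tendsto_choose_div_pow (m : ℕ) :
    Tendsto (fun n : ℕ => (n.choose m : ℝ) / (n : ℝ) ^ m) atTop (𝓝 (1 / m !)) := by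
  refine ((tendsto_descFactorial_div_pow m).div_const (m ! : ℝ)).congr fun n => ?_
  rw [descFactorial_eq_factorial_mul_choose, cast_mul]
  field_simp

theorem tendsto_natCast_div_two_mul_add (ν : ℕ) :
    Tendsto (fun n : ℕ => (n : ℝ) / (2 * n + ν : ℕ)) atTop (𝓝 (1 / 2)) := by
  refine ((tendsto_natCast_div_add_atTop ((ν : ℝ) / 2)).div_const 2).congr fun n => ?_
  rw [div_div]
  push_cast
  ring_nf

/-- A triangular array of weights `w n m` (`m ≤ n`) of size comparable to `n ^ (2 * m) / m !`:
the `m`-th column is asymptotic to `(c * n ^ 2) ^ m / m !`, and the whole array is dominated by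
`(K * n ^ 2) ^ m / m !`. Such a weight turns into a factor `exp (c / (4 * r))` when it acts on
sequences growing like `(2 * n + ν)! * r ^ n`. -/
structure IsExpWeight (w : ℕ → ℕ → ℝ) (K c : ℝ) : Prop where
  abs_le : ∀ n, ∀ m ≤ n, |w n m| ≤ (K * (n : ℝ) ^ 2) ^ m / (m ! : ℝ)
  tendsto : ∀ m, Tendsto (fun n : ℕ => w n m / (n : ℝ) ^ (2 * m)) atTop (𝓝 (c ^ m / m !))

namespace IsExpWeight

variable {w : ℕ → ℕ → ℝ} {K c : ℝ}

theorem bound_nonneg (hw : IsExpWeight w K c) : 0 ≤ K := by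
  simpa using (abs_nonneg _).trans (hw.abs_le 1 1 le_rfl)

theorem abs_div_descFactorial_le (hw : IsExpWeight w K c) (ν : ℕ) {n m : ℕ} (h : m ≤ n) :
    |w n m / (2 * n + ν).descFactorial (2 * m)| ≤ (K * exp 2) ^ m / m ! := by
  have hK := hw.bound_nonneg
  have hdesc : (0 : ℝ) < (2 * n + ν).descFactorial (2 * m) := by
    exact_mod_cast descFactorial_pos.2 (by lia)
  have hn : (n : ℝ) ^ (2 * m) ≤ exp 2 ^ m * (2 * n + ν).descFactorial (2 * m) := calc
    (n : ℝ) ^ (2 * m) ≤ ((2 * n + ν : ℕ) : ℝ) ^ (2 * m) := by gcongr; lia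
    _ ≤ exp (2 * m : ℕ) * (2 * n + ν).descFactorial (2 * m) :=
      pow_le_exp_mul_descFactorial (by lia)
    _ = exp 2 ^ m * (2 * n + ν).descFactorial (2 * m) := by
      rw [← exp_nat_mul, cast_mul, cast_ofNat, mul_comm (2 : ℝ)]
  rw [abs_div, abs_of_pos hdesc, div_le_iff₀ hdesc]
  calc |w n m| ≤ (K * (n : ℝ) ^ 2) ^ m / m ! := hw.abs_le n m h
    _ = K ^ m * (n : ℝ) ^ (2 * m) / m ! := by rw [mul_pow, pow_mul]
    _ ≤ K ^ m * (exp 2 ^ m * (2 * n + ν).descFactorial (2 * m)) / m ! := by gcongr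
    _ = (K * exp 2) ^ m / m ! * (2 * n + ν).descFactorial (2 * m) := by rw [mul_pow]; ring

theorem tendsto_div_descFactorial (hw : IsExpWeight w K c) (ν m : ℕ) :
    Tendsto (fun n : ℕ => w n m / (2 * n + ν).descFactorial (2 * m)) atTop
      (𝓝 ((c / 4) ^ m / m !)) := by
  have hindex : Tendsto (fun n : ℕ => 2 * n + ν) atTop atTop :=
    tendsto_atTop_mono (fun n => by lia : ∀ n, n ≤ 2 * n + ν) tendsto_id
  have hdesc := ((tendsto_descFactorial_div_pow (2 * m)).comp hindex).inv₀ one_ne_zero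
  have hlim := (hw.tendsto m).mul (((tendsto_natCast_div_two_mul_add ν).pow (2 * m)).mul hdesc)
  have hval : c ^ m / m ! * ((1 / 2) ^ (2 * m) * 1⁻¹) = (c / 4) ^ m / m ! := by
    rw [pow_mul, show ((1 : ℝ) / 2) ^ 2 = 1 / 4 by norm_num, inv_one, mul_one, div_mul_eq_mul_div,
      ← mul_pow, mul_one_div]
  rw [hval] at hlim
  refine hlim.congr' ?_
  filter_upwards [eventually_ne_atTop 0] with n hn
  have : ((2 * n + ν : ℕ) : ℝ) ≠ 0 := by positivity
  simp only [Function.comp_apply, div_pow, inv_div]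
  field_simp

end IsExpWeight

/-- `x n` is asymptotic to `L * (2 * n + ν)! * r ^ n` (in the sense that the ratio
`x n / ((2 * n + ν)! * r ^ n)` tends to `L`, which may vanish). -/
def HasFactorialGrowth (ν : ℕ) (r : ℝ) (x : ℕ → ℝ) (L : ℝ) : Prop :=
  Tendsto (fun n => x n / ((2 * n + ν)! * r ^ n)) atTop (𝓝 L)

namespace HasFactorialGrowth

variable {ν : ℕ} {r L : ℝ} {x : ℕ → ℝ}

theorem congr_eventuallyEq {y : ℕ → ℝ} (h : HasFactorialGrowth ν r x L) (hxy : x =ᶠ[atTop] y) :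
    HasFactorialGrowth ν r y L :=
  Tendsto.congr' (hxy.mono fun n hn => by simp only [hn]) h

theorem div_pow (h : HasFactorialGrowth ν r x L) {b : ℝ} (hb : b ≠ 0) :
    HasFactorialGrowth ν (r / b) (fun n => x n / b ^ n) L := by
  refine Tendsto.congr (fun n => ?_) h
  rw [_root_.div_pow]
  field_simp

theorem exists_abs_div_le (h : HasFactorialGrowth ν r x L) :
    ∃ B, ∀ n, |x n / ((2 * n + ν)! * r ^ n)| ≤ B := by
  obtain ⟨B, hB⟩ := (Metric.isBounded_range_of_tendsto _ h).exists_norm_le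
  exact ⟨B, fun n => hB _ ⟨n, rfl⟩⟩

theorem sum_expWeight {w : ℕ → ℕ → ℝ} {K c : ℝ} (h : HasFactorialGrowth ν r x L) (hr : r ≠ 0)
    (hw : IsExpWeight w K c) :
    HasFactorialGrowth ν r (fun n => ∑ m ∈ range (n + 1), w n m * x (n - m))
      (L * exp (c / (4 * r))) := by
  set y : ℕ → ℝ := fun n => x n / ((2 * n + ν)! * r ^ n)
  obtain ⟨B, hB⟩ := h.exists_abs_div_le
  have hK := hw.bound_nonneg
  have hterm (n m : ℕ) (hm : m ≤ n) : w n m * x (n - m) / ((2 * n + ν)! * r ^ n) =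
      w n m / (2 * n + ν).descFactorial (2 * m) * r⁻¹ ^ m * y (n - m) := by
    have hpow : r ^ n = r ^ (n - m) * r ^ m := by rw [← pow_add, Nat.sub_add_cancel hm]
    simp only [y, factorial_two_mul_add_eq ν hm, hpow, cast_mul, inv_pow]
    field_simp
  have hexp : L * exp (c / (4 * r)) = ∑' m : ℕ, (c / 4) ^ m / m ! * r⁻¹ ^ m * L := by
    rw [exp_eq_exp_ℝ, NormedSpace.exp_eq_tsum_div, ← tsum_mul_left]
    refine tsum_congr fun m => ?_
    rw [← div_div, _root_.div_pow (c / 4), inv_pow]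
    ring
  rw [hexp]
  refine (tendsto_sum_range_succ_of_dominated
    (bound := fun m => B * ((K * exp 2 * |r⁻¹|) ^ m / m !))
    ((summable_pow_div_factorial _).mul_left _)
    (fun m => ((hw.tendsto_div_descFactorial ν m).mul_const _).mul
      (Tendsto.comp h (tendsto_sub_atTop_nat m)))
    fun n m hm => ?_).congr fun n => ?_
  · rw [Real.norm_eq_abs, abs_mul, abs_mul, abs_pow]
    calc _ ≤ (K * exp 2) ^ m / m ! * |r⁻¹| ^ m * B := by
          gcongr
          · exact hw.abs_div_descFactorial_le ν hm
          · exact hB _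
      _ = B * ((K * exp 2 * |r⁻¹|) ^ m / m !) := by rw [mul_pow (K * exp 2)]; ring
  · rw [sum_div]
    exact (sum_congr rfl fun m hm => hterm n m (mem_range_succ_iff.1 hm)).symm

end HasFactorialGrowth

theorem stirling1_eq_stirlingFirst (n j : ℕ) : stirling1 n j = stirlingFirst n j := by
  induction n generalizing j with
  | zero => cases j <;> simp [stirling1, coeff_one]
  | succ n ih =>
    rw [stirling1, prod_range_succ, mul_add, coeff_add, coeff_mul_C, ← stirling1, ih]
    cases j with
    | zero => cases n <;> simp
    | succ j =>
      rw [coeff_mul_X, ← stirling1, ih, stirlingFirst_succ_succ]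
      push_cast
      ring

theorem add_one_pow_succ_le {R : Type*} [CommRing R] [LinearOrder R] [IsStrictOrderedRing R]
    {z : R} (hz : 0 ≤ z) (k : ℕ) :
    (z + 1) ^ (k + 1) ≤ z ^ (k + 1) + (k + 1) * (z + 1) ^ k := by
  have hdiff := (le_abs_self _).trans (abs_pow_sub_pow_le (z + 1) z (k + 1))
  rw [add_sub_cancel_left, abs_one, one_mul, abs_of_nonneg (by positivity : 0 ≤ z + 1),
    abs_of_nonneg hz, max_eq_left (by linarith), Nat.add_sub_cancel, cast_succ] at hdiff
  linarith

theorem two_pow_mul_factorial_mul_stirlingFirst_succ (m d : ℕ) :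
    2 ^ (m + 1) * (m + 1)! * stirlingFirst (d + 1 + (m + 1)) (d + 1) =
      2 * (m + 1) * (d + 1 + m) * (2 ^ m * m ! * stirlingFirst (d + 1 + m) (d + 1)) +
        2 ^ (m + 1) * (m + 1)! * stirlingFirst (d + (m + 1)) d := by
  rw [show d + 1 + (m + 1) = d + 1 + m + 1 by ring, stirlingFirst_succ_succ,
    show d + (m + 1) = d + 1 + m by ring, factorial_succ]
  ring

theorem two_pow_mul_factorial_mul_stirlingFirst_le (m d : ℕ) :
    2 ^ m * m ! * stirlingFirst (d + m) d ≤ (d + m) ^ (2 * m) := by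
  induction m generalizing d with
  | zero => simp [stirlingFirst_self]
  | succ m ihm =>
    induction d with
    | zero => simp
    | succ d ihd =>
      calc _ ≤ 2 * (m + 1) * (d + 1 + m) * (d + 1 + m) ^ (2 * m) +
              (d + (m + 1)) ^ (2 * (m + 1)) := by
            rw [two_pow_mul_factorial_mul_stirlingFirst_succ]
            gcongr
            exact ihm (d + 1)
        _ = (d + 1 + m) ^ (2 * (m + 1)) +
              (2 * (m + 1) : ℕ) * (d + 1 + m) ^ (2 * (m + 1) - 1) * 1 := by
            rw [show 2 * (m + 1) - 1 = 2 * m + 1 by lia, show d + (m + 1) = d + 1 + m by ring]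
            ring
        _ ≤ (d + 1 + (m + 1)) ^ (2 * (m + 1)) := pow_add_mul_le_add_pow (by simp) (by simp) _

theorem pow_le_two_pow_mul_factorial_mul_stirlingFirst (m d : ℕ) :
    d ^ (2 * m) ≤ 2 ^ m * m ! * stirlingFirst (d + m) d := by
  induction m generalizing d with
  | zero => simp [stirlingFirst_self]
  | succ m ihm =>
    induction d with
    | zero => simp
    | succ d ihd =>
      calc (d + 1) ^ (2 * m + 1 + 1)
          ≤ d ^ (2 * m + 1 + 1) + (2 * m + 1 + 1) * (d + 1) ^ (2 * m + 1) := by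
            exact_mod_cast add_one_pow_succ_le (cast_nonneg (α := ℤ) d) (2 * m + 1)
        _ = 2 * (m + 1) * (d + 1) * (d + 1) ^ (2 * m) + d ^ (2 * (m + 1)) := by ring
        _ ≤ _ := by
            rw [two_pow_mul_factorial_mul_stirlingFirst_succ]
            exact Nat.add_le_add
              (Nat.mul_le_mul (Nat.mul_le_mul_left _ (Nat.le_add_right _ _)) (ihm (d + 1))) ihd

theorem stirlingFirst_sub_le {n m : ℕ} (h : m ≤ n) :
    (stirlingFirst n (n - m) : ℝ) ≤ (1 / 2 * (n : ℝ) ^ 2) ^ m / m ! := by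
  have hle := two_pow_mul_factorial_mul_stirlingFirst_le m (n - m)
  rw [Nat.sub_add_cancel h] at hle
  have hle' : (2 ^ m * m ! * stirlingFirst n (n - m) : ℝ) ≤ (n : ℝ) ^ (2 * m) := by
    exact_mod_cast hle
  rw [mul_pow, one_div_pow, ← pow_mul, one_div_mul_eq_div, div_div, le_div_iff₀' (by positivity)]
  exact hle'

theorem le_stirlingFirst_sub {n m : ℕ} (h : m ≤ n) :
    (1 / 2 * ((n - m : ℕ) : ℝ) ^ 2) ^ m / m ! ≤ stirlingFirst n (n - m) := by
  have hle := pow_le_two_pow_mul_factorial_mul_stirlingFirst m (n - m)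
  rw [Nat.sub_add_cancel h] at hle
  have hle' : ((n - m : ℕ) : ℝ) ^ (2 * m) ≤ 2 ^ m * m ! * stirlingFirst n (n - m) := by
    exact_mod_cast hle
  rw [mul_pow, one_div_pow, ← pow_mul, one_div_mul_eq_div, div_div, div_le_iff₀' (by positivity)]
  exact hle'

theorem tendsto_natCast_sub_div (k : ℕ) :
    Tendsto (fun n : ℕ => ((n - k : ℕ) : ℝ) / n) atTop (𝓝 1) := by
  have hlim : Tendsto (fun n : ℕ => 1 - (k : ℝ) / n) atTop (𝓝 (1 - 0)) :=
    tendsto_const_nhds.sub (tendsto_const_div_atTop_nhds_zero_nat _)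
  rw [sub_zero] at hlim
  refine hlim.congr' ?_
  filter_upwards [eventually_ge_atTop k, eventually_ne_atTop 0] with n hk hn
  rw [cast_sub hk, one_sub_div (by positivity)]

theorem isExpWeight_stirlingFirst :
    IsExpWeight (fun n m => stirlingFirst n (n - m)) (1 / 2) (1 / 2) where
  abs_le n m hm := by
    rw [abs_cast]
    exact stirlingFirst_sub_le hm
  tendsto m := by
    have hlower := ((tendsto_natCast_sub_div m).pow (2 * m)).const_mul ((1 / 2 : ℝ) ^ m / m !)
    rw [one_pow, mul_one] at hlower
    refine tendsto_of_tendsto_of_tendsto_of_le_of_le' hlower tendsto_const_nhds ?_ ?_ <;>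
      filter_upwards [eventually_ge_atTop m, eventually_ne_atTop 0] with n hm hn
    · calc (1 / 2 : ℝ) ^ m / m ! * (((n - m : ℕ) : ℝ) / n) ^ (2 * m)
          = (1 / 2 * ((n - m : ℕ) : ℝ) ^ 2) ^ m / m ! / (n : ℝ) ^ (2 * m) := by
            rw [mul_pow, ← pow_mul, div_pow ((n - m : ℕ) : ℝ)]
            ring
        _ ≤ stirlingFirst n (n - m) / (n : ℝ) ^ (2 * m) := by
            gcongr
            exact le_stirlingFirst_sub hm
    · calc stirlingFirst n (n - m) / (n : ℝ) ^ (2 * m)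
          ≤ (1 / 2 * (n : ℝ) ^ 2) ^ m / m ! / (n : ℝ) ^ (2 * m) := by
            gcongr
            exact stirlingFirst_sub_le hm
        _ = (1 / 2) ^ m / m ! := by
            rw [mul_pow, ← pow_mul]
            field_simp

theorem isExpWeight_choose_mul_pow (a : ℝ) :
    IsExpWeight (fun n m => n.choose m * a ^ m) |a| 0 where
  abs_le n m _ := by
    have hn : (n : ℝ) ^ m ≤ ((n : ℝ) ^ 2) ^ m := by
      gcongr
      exact_mod_cast le_self_pow two_ne_zero n
    calc |(n.choose m : ℝ) * a ^ m| = n.choose m * |a| ^ m := by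
          rw [abs_mul, abs_cast, abs_pow]
      _ ≤ (n : ℝ) ^ m / m ! * |a| ^ m := by gcongr; exact choose_le_pow_div m n
      _ ≤ ((n : ℝ) ^ 2) ^ m / m ! * |a| ^ m := by gcongr
      _ = (|a| * (n : ℝ) ^ 2) ^ m / m ! := by rw [mul_pow]; ring
  tendsto m := by
    have hinv : Tendsto (fun n : ℕ => (1 / (n : ℝ)) ^ m) atTop (𝓝 (0 ^ m)) :=
      tendsto_one_div_atTop_nhds_zero_nat.pow m
    have hlim := ((tendsto_choose_div_pow m).mul_const (a ^ m)).mul hinv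
    have hval : 1 / (m ! : ℝ) * a ^ m * 0 ^ m = 0 ^ m / m ! := by
      rcases m with _ | m <;> simp
    rw [hval] at hlim
    refine hlim.congr fun n => ?_
    rw [two_mul, pow_add, one_div_pow, ← div_div, mul_one_div, div_mul_eq_mul_div]

theorem isExpWeight_alternating_choose_mul_descFactorial :
    IsExpWeight (fun n m => (-1) ^ m * (n - 1).choose m * n.descFactorial m) 1 (-1) where
  abs_le n m _ := by
    have hchoose : ((n - 1).choose m : ℝ) ≤ (n : ℝ) ^ m / m ! :=
      (cast_le.2 (choose_le_choose m (Nat.sub_le n 1))).trans (choose_le_pow_div m n)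
    have hdesc : (n.descFactorial m : ℝ) ≤ (n : ℝ) ^ m := by
      exact_mod_cast descFactorial_le_pow n m
    calc |(-1) ^ m * ((n - 1).choose m : ℝ) * n.descFactorial m|
        = (n - 1).choose m * n.descFactorial m := by
          rw [abs_mul, abs_mul, abs_neg_one_pow, one_mul, abs_cast, abs_cast]
      _ ≤ (n : ℝ) ^ m / m ! * (n : ℝ) ^ m := by gcongr
      _ = (1 * (n : ℝ) ^ 2) ^ m / m ! := by ring
  tendsto m := by
    have hchoose := (tendsto_choose_div_pow m).comp (tendsto_sub_atTop_nat 1)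
    have hlim := ((hchoose.mul ((tendsto_natCast_sub_div 1).pow m)).mul
      (tendsto_descFactorial_div_pow m)).const_mul ((-1 : ℝ) ^ m)
    rw [one_pow, mul_one, mul_one, mul_one_div] at hlim
    refine hlim.congr' ?_
    filter_upwards [eventually_ge_atTop 2] with n hn
    have hn_sub : 0 < n - 1 := by lia
    simp only [Function.comp_apply, div_pow, two_mul, pow_add]
    field_simp

theorem Df_eq_sum_choose (M : ℕ) (f : ℤ → ℝ) (ν a b n : ℕ) :
    Df M f ν a b n =
      (∑ m ∈ range (n + 1), n.choose m * (a : ℝ) ^ m * Cf M f ν (n - m)) / (b : ℝ) ^ n := by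
  rw [Df, ← sum_range_reflect, inv_mul_eq_div]
  congr 1
  refine sum_congr rfl fun m hm => ?_
  have hm' : m ≤ n := mem_range_succ_iff.1 hm
  rw [Nat.add_sub_cancel, choose_symm hm', Nat.sub_sub_self hm']

theorem factorial_mul_xif_eq_sum (M : ℕ) (f : ℤ → ℝ) (ν a b : ℕ) {n : ℕ} (hn : n ≠ 0) :
    n ! * xif M f ν a b n =
      ∑ m ∈ range (n + 1), stirlingFirst n (n - m) * Df M f ν a b (n - m) := by
  obtain ⟨n, rfl⟩ := exists_eq_succ_of_ne_zero hn
  rw [sum_range_succ, Nat.sub_self, stirlingFirst_succ_zero, cast_zero, zero_mul, add_zero, xif,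
    ← mul_assoc, mul_one_div_cancel (by positivity), one_mul]
  simp only [stirling1_eq_stirlingFirst]

theorem hasFactorialGrowth_Df {M : ℕ} {f : ℤ → ℝ} {ν : ℕ} {r L : ℝ}
    (h : HasFactorialGrowth ν r (Cf M f ν) L) (hr : r ≠ 0) (a : ℕ) {b : ℕ} (hb : b ≠ 0) :
    HasFactorialGrowth ν (r / b) (Df M f ν a b) L := by
  have hsum := (h.sum_expWeight hr (isExpWeight_choose_mul_pow a)).div_pow
    (cast_ne_zero.2 hb)
  rw [zero_div, exp_zero, mul_one] at hsum
  exact hsum.congr_eventuallyEq (.of_forall fun n => (Df_eq_sum_choose M f ν a b n).symm)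

theorem hasFactorialGrowth_factorial_mul_xif {M : ℕ} {f : ℤ → ℝ} {ν a b : ℕ} {r L : ℝ}
    (h : HasFactorialGrowth ν r (Df M f ν a b) L) (hr : r ≠ 0) :
    HasFactorialGrowth ν r (fun n => n ! * xif M f ν a b n) (L * exp (1 / 2 / (4 * r))) := by
  refine (h.sum_expWeight hr isExpWeight_stirlingFirst).congr_eventuallyEq ?_
  filter_upwards [eventually_ne_atTop 0] with n hn
  exact (factorial_mul_xif_eq_sum M f ν a b hn).symm

theorem HasFactorialGrowth.factorial_mul_alternating_sum {ν : ℕ} {r L : ℝ} {x : ℕ → ℝ}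
    (h : HasFactorialGrowth ν r (fun n => n ! * x n) L) (hr : r ≠ 0) :
    HasFactorialGrowth ν r
      (fun n => n ! * ∑ ℓ ∈ range n, (-1) ^ ℓ * (n - 1).choose ℓ * x (n - ℓ))
      (L * exp (-1 / (4 * r))) := by
  refine (h.sum_expWeight hr
    isExpWeight_alternating_choose_mul_descFactorial).congr_eventuallyEq ?_
  filter_upwards [eventually_ne_atTop 0] with n hn
  rw [sum_range_succ, choose_eq_zero_of_lt (by lia : n - 1 < n), cast_zero, mul_zero, zero_mul,
    zero_mul, add_zero, mul_sum]
  refine sum_congr rfl fun m hm => ?_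
  rw [← factorial_mul_descFactorial (mem_range.1 hm).le]
  push_cast
  ring

theorem hasFactorialGrowth_factorial_mul_alternating_sum_xif {M : ℕ} {f : ℤ → ℝ} {ν : ℕ} {r L : ℝ}
    (h : HasFactorialGrowth ν r (Cf M f ν) L) (hr : r ≠ 0) (a : ℕ) {b : ℕ} (hb : b ≠ 0) :
    HasFactorialGrowth ν (r / b)
      (fun n => n ! * ∑ ℓ ∈ range n, (-1) ^ ℓ * (n - 1).choose ℓ * xif M f ν a b (n - ℓ))
      (L * exp (-(b / (8 * r)))) := by
  have hrb : r / b ≠ 0 := div_ne_zero hr (cast_ne_zero.2 hb)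
  have hexp : exp (1 / 2 / (4 * (r / b))) * exp (-1 / (4 * (r / b))) = exp (-(b / (8 * r))) := by
    rw [← exp_add]
    congr 1
    field_simp
    norm_num
  rw [← hexp, ← mul_assoc]
  exact (hasFactorialGrowth_factorial_mul_xif (hasFactorialGrowth_Df h hr a hb)
    hrb).factorial_mul_alternating_sum hrb

/-- The sine (`ν = 0`) or cosine (`ν ≠ 0`) occurring in `Gf M f ν`. -/
noncomputable def sinOrCos (ν : ℕ) (x : ℝ) : ℝ :=
  if ν = 0 then sin x else cos x

theorem abs_sinOrCos_le_one (ν : ℕ) (x : ℝ) : |sinOrCos ν x| ≤ 1 := by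
  unfold sinOrCos
  split_ifs
  exacts [abs_sin_le_one x, abs_cos_le_one x]

theorem sinOrCos_nat_mul_two_pi (ν j : ℕ) : sinOrCos ν (j * (2 * π)) = sinOrCos ν 0 := by
  unfold sinOrCos
  split_ifs
  · simpa using sin_add_nat_mul_two_pi 0 j
  · simp

theorem hasSum_sinOrCos_div_pow {ν n : ℕ} (hν : ν = 0 ∨ ν = 1) (hn : n ≠ 0) {x : ℝ}
    (hx : x ∈ Set.Icc (0 : ℝ) 1) :
    HasSum (fun j : ℕ => sinOrCos ν (2 * π * j * x) / (j : ℝ) ^ (2 * n + ν + 1))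
      ((-1) ^ (n + ν + 1) * (2 * π) ^ (2 * n + ν + 1) / 2 / (2 * n + ν + 1)! *
        aeval x (Polynomial.bernoulli (2 * n + ν + 1))) := by
  rcases hν with rfl | rfl
  · simpa [sinOrCos, div_eq_inv_mul] using hasSum_one_div_nat_pow_mul_sin hn hx
  · simpa [sinOrCos, div_eq_inv_mul, mul_add] using
      hasSum_one_div_nat_pow_mul_cos (succ_ne_zero n) hx

theorem sum_Icc_one_eq_sum_range {G : Type*} [AddCommMonoid G] {M : ℕ} {h : ℕ → G}
    (hM : h M = h 0) : ∑ m ∈ Icc 1 M, h m = ∑ m ∈ range M, h m := by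
  rcases M with _ | M
  · simp
  · rw [← Ico_add_one_right_eq_Icc, sum_Ico_add' h 0 (M + 1) 1 |>.symm, ← range_eq_Ico,
      sum_range_succ, hM, ← sum_range_succ']

theorem Gf_eq_sum_range (M : ℕ) (f : ℤ → ℝ) (ν j : ℕ) :
    Gf M f ν j = 2 / √M * ∑ m ∈ range M, f m * sinOrCos ν (2 * π * j * (m / M)) := by
  have harg (m : ℕ) : 2 * π * m * j / M = 2 * π * j * (m / M) := by ring
  simp only [Gf, sinOrCos, harg]
  split_ifs <;> rfl

theorem abs_Gf_le (M : ℕ) (f : ℤ → ℝ) (ν j : ℕ) :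
    |Gf M f ν j| ≤ 2 / √M * ∑ m ∈ range M, |f m| := by
  rw [Gf_eq_sum_range, abs_mul, abs_of_nonneg (by positivity : 0 ≤ 2 / √(M : ℝ))]
  gcongr
  refine (abs_sum_le_sum_abs _ _).trans (sum_le_sum fun m _ => ?_)
  rw [abs_mul]
  exact mul_le_of_le_one_right (abs_nonneg _) (abs_sinOrCos_le_one _ _)

theorem Gf_eq_sum_Icc {M : ℕ} (hM : M ≠ 0) {f : ℤ → ℝ} (hf : Function.Periodic f M) (ν j : ℕ) :
    Gf M f ν j = 2 / √M * ∑ m ∈ Icc 1 M, f m * sinOrCos ν (2 * π * j * (m / M)) := by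
  have hend : f (M : ℕ) * sinOrCos ν (2 * π * j * ((M : ℕ) / M)) =
      f (0 : ℕ) * sinOrCos ν (2 * π * j * ((0 : ℕ) / M)) := by
    have hfM : f M = f 0 := by simpa using hf 0
    rw [div_self (cast_ne_zero.2 hM), mul_one, mul_comm (2 * π) (j : ℝ),
      sinOrCos_nat_mul_two_pi, hfM]
    simp
  rw [sum_Icc_one_eq_sum_range hend, Gf_eq_sum_range]

theorem ratCast_eval_bernoulli (k m M : ℕ) :
    (((Polynomial.bernoulli k).eval ((m : ℚ) / (M : ℚ)) : ℚ) : ℝ) =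
      aeval (m / M : ℝ) (Polynomial.bernoulli k) := by
  simpa using (aeval_algebraMap_apply ℝ (m / M : ℚ) (Polynomial.bernoulli k)).symm

theorem hasSum_Gf_div_pow {M : ℕ} (hM : M ≠ 0) {f : ℤ → ℝ} (hf : Function.Periodic f M)
    {ν n : ℕ} (hν : ν = 0 ∨ ν = 1) (hn : n ≠ 0) :
    HasSum (fun j : ℕ => Gf M f ν j / (j : ℝ) ^ (2 * n + ν + 1))
      ((-1) ^ ν * √M * Cf M f ν n / ((2 * n + ν)! * (M / (2 * π)) ^ (2 * n + ν + 1))) := by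
  have hM' : (0 : ℝ) < M := by positivity
  have hx {m : ℕ} (hm : m ∈ Icc 1 M) : (m / M : ℝ) ∈ Set.Icc (0 : ℝ) 1 :=
    ⟨by positivity, (div_le_one hM').2 (cast_le.2 (mem_Icc.1 hm).2)⟩
  have hsum := (hasSum_sum fun m (hm : m ∈ Icc 1 M) =>
    (hasSum_sinOrCos_div_pow hν hn (hx hm)).mul_left (f m)).mul_left (2 / √M)
  convert! hsum using 1
  · funext j
    rw [Gf_eq_sum_Icc hM hf, mul_div_assoc, sum_div]
    simp only [mul_div_assoc]
  · simp only [Cf, ratCast_eval_bernoulli, mul_left_comm (f _), ← mul_sum, factorial_succ]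
    generalize ∑ m ∈ Icc 1 M, f m * aeval (m / M : ℝ) (Polynomial.bernoulli (2 * n + ν + 1)) = S
    rw [div_pow, pow_succ (M : ℝ), add_right_comm n ν 1, pow_add (-1 : ℝ) (n + 1) ν]
    push_cast
    field_simp
    rw [sq_sqrt hM'.le]
    ring

theorem tendsto_pow_mul_tsum_div_pow {c : ℕ → ℝ} {B : ℝ} (hc : ∀ j, |c j| ≤ B) {k : ℕ}
    (hk : k ≠ 0) (hmin : ∀ j, 1 ≤ j → j < k → c j = 0) :
    Tendsto (fun s : ℕ => (k : ℝ) ^ s * ∑' j : ℕ, c j / (j : ℝ) ^ s) atTop (𝓝 (c k)) := by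
  obtain ⟨k, rfl⟩ := exists_eq_succ_of_ne_zero hk
  let F : ℕ → ℂ := fun j => if j = 0 then 0 else c j
  have hF : ∀ m ≤ k, F m = 0 := fun m hm => by
    by_cases hm0 : m = 0
    · simp [F, hm0]
    · simp [F, hm0, hmin m (by lia) (by lia)]
  have hconv : LSeries.abscissaOfAbsConv F < ⊤ :=
    (LSeries.abscissaOfAbsConv_le_of_le_const ⟨B, fun j hj => by simpa [F, hj] using hc j⟩).trans_lt
      (by decide)
  have hlim := (LSeries.tendsto_cpow_mul_atTop hF hconv).comp tendsto_natCast_atTop_atTop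
  have hre := (Complex.continuous_re.tendsto _).comp hlim
  have hval : (F (k + 1)).re = c (k + 1) := by simp [F]
  rw [hval] at hre
  refine hre.congr' ?_
  filter_upwards [eventually_ne_atTop 0] with s hs
  have hL : LSeries F (s : ℂ) = (∑' j : ℕ, c j / (j : ℝ) ^ s : ℝ) := by
    rw [LSeries, Complex.ofReal_tsum]
    refine tsum_congr fun j => ?_
    by_cases hj : j = 0
    · simp [hj, hs]
    · simp [F, hj]
  simp only [Function.comp_apply, Complex.ofReal_natCast, hL, Complex.cpow_natCast]
  norm_cast

theorem hasFactorialGrowth_Cf {M : ℕ} (hM : M ≠ 0) {f : ℤ → ℝ} (hf : Function.Periodic f M)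
    {ν : ℕ} (hν : ν = 0 ∨ ν = 1) {k : ℕ} (hk : k ≠ 0)
    (hmin : ∀ j, 1 ≤ j → j < k → Gf M f ν j = 0) :
    HasFactorialGrowth ν ((M / (2 * π * k)) ^ 2) (Cf M f ν)
      ((-1) ^ ν * (M / (2 * π * k)) ^ (ν + 1) / √M * Gf M f ν k) := by
  have hindex : Tendsto (fun n : ℕ => 2 * n + ν + 1) atTop atTop :=
    tendsto_atTop_mono (fun n => by lia : ∀ n, n ≤ 2 * n + ν + 1) tendsto_id
  have hlead := ((tendsto_pow_mul_tsum_div_pow (abs_Gf_le M f ν) hk hmin).comp hindex).const_mul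
    ((-1) ^ ν * (M / (2 * π * k) : ℝ) ^ (ν + 1) / √M)
  refine Tendsto.congr' ?_ hlead
  filter_upwards [eventually_ne_atTop 0] with n hn
  have hpow : ((M : ℝ) / (2 * π)) ^ (2 * n + ν + 1) =
      (M / (2 * π * k)) ^ (ν + 1) * ((M / (2 * π * k)) ^ 2) ^ n * k ^ (2 * n + ν + 1) := by
    rw [← pow_mul, ← pow_add, show ν + 1 + 2 * n = 2 * n + ν + 1 by ring, ← mul_pow]
    field_simp
  simp only [Function.comp_apply, (hasSum_Gf_div_pow hM hf hν hn).tsum_eq, hpow]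
  have hρ : (M / (2 * π * k) : ℝ) ≠ 0 := by positivity
  generalize (M / (2 * π * k) : ℝ) = ρ at hρ
  have hM' : √(M : ℝ) ≠ 0 := by positivity
  field_simp
  rw [← pow_mul, mul_comm ν, pow_mul, neg_one_sq, one_pow, one_mul]

theorem isEquivalent_factorial_two_mul :
    (fun n : ℕ => ((2 * n)! : ℝ)) ~[atTop]
      fun n => 2 ^ (2 * n) * (n ! : ℝ) ^ 2 * (n : ℝ) ^ (-(1 / 2) : ℝ) / √π := by
  have hindex : Tendsto (fun n : ℕ => 2 * n) atTop atTop :=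
    tendsto_atTop_mono (fun n => by lia : ∀ n, n ≤ 2 * n) tendsto_id
  have hdouble := Stirling.factorial_isEquivalent_stirling.comp_tendsto hindex
  have hsq := Stirling.factorial_isEquivalent_stirling.pow 2
  have hprod := (Asymptotics.IsEquivalent.refl (u := fun n : ℕ => (2 : ℝ) ^ (2 * n))).mul hsq.symm
  have hall := hprod.mul (.refl (u := fun n : ℕ => (n : ℝ) ^ (-(1 / 2) : ℝ) / √π))
  refine (hdouble.congr_right ?_).trans (hall.congr_right (.of_forall fun n => ?_))
  · filter_upwards [eventually_ne_atTop 0] with n hn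
    have hsqrt : √(2 * (2 * n : ℕ) * π) = √(2 * n * π) ^ 2 * (n : ℝ) ^ (-(1 / 2) : ℝ) / √π := by
      rw [sq_sqrt (by positivity), rpow_neg (by positivity), ← sqrt_eq_rpow,
        sqrt_eq_iff_mul_self_eq (by positivity) (by positivity)]
      field_simp
      rw [sq_sqrt (by positivity), sq_sqrt (by positivity)]
      push_cast
      ring
    simp only [Function.comp_apply, Pi.mul_apply, Pi.pow_apply, hsqrt]
    push_cast
    ring
  · simp only [Pi.mul_apply, Pi.pow_apply]
    ring

theorem isEquivalent_factorial_two_mul_add (ν : ℕ) :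
    (fun n : ℕ => ((2 * n + ν)! : ℝ)) ~[atTop]
      fun n => 2 ^ (2 * n + ν) * (n ! : ℝ) ^ 2 * (n : ℝ) ^ (ν - 1 / 2 : ℝ) / √π := by
  induction ν with
  | zero => simpa using isEquivalent_factorial_two_mul
  | succ ν ih =>
    have hfactor : (fun n : ℕ => ((2 * n + ν + 1 : ℕ) : ℝ)) ~[atTop] fun n => 2 * (n : ℝ) := by
      have hratio := ((tendsto_natCast_div_two_mul_add (ν + 1)).const_mul 2).inv₀ (by norm_num)
      rw [mul_one_div_cancel two_ne_zero, inv_one] at hratio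
      refine Asymptotics.isEquivalent_of_tendsto_one (hratio.congr fun n => ?_)
      rw [Pi.div_apply, ← mul_div_assoc, inv_div, add_assoc]
    refine ((hfactor.mul ih).congr_left (.of_forall fun n => ?_)).congr_right ?_
    · simp only [Pi.mul_apply, ← add_assoc, factorial_succ, cast_mul]
    · filter_upwards [eventually_ne_atTop 0] with n hn
      have hpow : (n : ℝ) ^ ((ν + 1 : ℕ) - 1 / 2 : ℝ) = n ^ (ν - 1 / 2 : ℝ) * n := by
        rw [← rpow_add_one (by positivity)]
        push_cast
        ring_nf
      simp only [Pi.mul_apply, hpow]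
      ring

theorem HasFactorialGrowth.isEquivalent {ν : ℕ} {r L : ℝ} {x : ℕ → ℝ}
    (h : HasFactorialGrowth ν r (fun n => n ! * x n) L) (hL : L ≠ 0) :
    x ~[atTop] fun n =>
      L * r ^ n * 2 ^ (2 * n + ν) * n ! * (n : ℝ) ^ (ν - 1 / 2 : ℝ) / √π := by
  have hlead : (fun n => n ! * x n) ~[atTop] fun n => L * ((2 * n + ν)! * r ^ n) := by
    refine Asymptotics.isEquivalent_of_tendsto_one ?_
    have hone := Tendsto.div_const h L
    rw [div_self hL] at hone
    refine hone.congr fun n => ?_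
    rw [Pi.div_apply, div_div, mul_comm L]
  have hstirling := hlead.trans ((Asymptotics.IsEquivalent.refl (u := fun _ => L)).mul
    ((isEquivalent_factorial_two_mul_add ν).mul (.refl (u := fun n => r ^ n))))
  refine ((hstirling.div (.refl (u := fun n : ℕ => (n ! : ℝ)))).congr_left
    (.of_forall fun n => ?_)).congr_right (.of_forall fun n => ?_)
  · simp only [Pi.div_apply]
    field_simp
  · simp only [Pi.div_apply, Pi.mul_apply]
    field_simp

/-- With `g(n) = ∑_{ℓ=0}^{n−1} (−1)^ℓ C(n−1,ℓ) ξ(n−ℓ)` (the coefficients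
of `F_f(1/(1+q))`),
`g(n) ~ (−1)^ν (M/(2πk_ν))^(2n+ν+1) G_f^{(ν)}(k_ν) 2^(2n+ν) n! n^(ν−1/2)
        e^(−b k_ν² π²/(2M²)) / (b^n √(πM))` as `n → ∞`. -/
theorem gf_asymptotic (M : ℕ) (hM : 2 ≤ M) (f : ℤ → ℝ)
    (hf : ∀ n : ℤ, f (n + M) = f n) (ν : ℕ) (hν : ν = 0 ∨ ν = 1)
    (a b : ℕ) (hb : 1 ≤ b)
    (kν : ℕ) (hkν : 1 ≤ kν) (hG : Gf M f ν kν ≠ 0)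
    (hmin : ∀ j : ℕ, 1 ≤ j → j < kν → Gf M f ν j = 0)
    (g : ℕ → ℝ)
    (hg : ∀ n : ℕ, 1 ≤ n → g n = ∑ ℓ ∈ Finset.range n,
      (-1) ^ ℓ * ((n - 1).choose ℓ : ℝ) * xif M f ν a b (n - ℓ)) :
    Filter.Tendsto
      (fun n : ℕ => g n /
        ((-1) ^ ν * ((M : ℝ) / (2 * Real.pi * kν)) ^ (2 * n + ν + 1) * Gf M f ν kν *
          2 ^ (2 * n + ν) * (n.factorial : ℝ) * (n : ℝ) ^ ((ν : ℝ) - 1 / 2) *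
          Real.exp (-((b : ℝ) * (kν : ℝ) ^ 2 * Real.pi ^ 2 / (2 * (M : ℝ) ^ 2))) /
          ((b : ℝ) ^ n * Real.sqrt (Real.pi * M))))
      Filter.atTop (nhds 1) := by
  have hC := hasFactorialGrowth_Cf (by lia) hf hν (by lia) hmin
  have hsum := hasFactorialGrowth_factorial_mul_alternating_sum_xif hC (by positivity) a
    (by lia : b ≠ 0)
  have hgrowth := hsum.congr_eventuallyEq (y := fun n => n ! * g n) <| by
    filter_upwards [eventually_ge_atTop 1] with n hn
    rw [hg n hn]
  have hexp : (b : ℝ) / (8 * (M / (2 * π * kν)) ^ 2) = b * kν ^ 2 * π ^ 2 / (2 * M ^ 2) := by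
    field_simp
    norm_num
  rw [hexp] at hgrowth
  refine ((Asymptotics.isEquivalent_iff_tendsto_one ?_).1
    (hgrowth.isEquivalent (by positivity))).congr fun n => ?_
  · filter_upwards [eventually_ne_atTop 0] with n hn
    positivity
  · rw [Pi.div_apply, sqrt_mul pi_nonneg, div_pow (_ ^ 2) (b : ℝ), ← pow_mul, add_assoc (2 * n),
      pow_add _ (2 * n) (ν + 1)]
    generalize (M / (2 * π * kν) : ℝ) = ρ
    congr 1
    ring
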